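/- Let λ, μ > 0 and let (u, N) be a solution of the Maxwell–Chern–Simons vortex equations with parameters λ, μ. Then ∫_Ω λ² e^{u(x)} (1 − N(x)/λ) dx = 4π𝔐, and moreover ∫_Ω λ² e^{u(x)} |1 − N(x)/λ| dx = 4π𝔐. -/

import Mathlib

/-!
The two equations combine, off the vortex points, to `λ² e^u (1 - N/λ) = -Δu - ΔN/μ`, so the first
identity is the statement that over the cell `ΔN` integrates to `0` and the pointwise Laplacian
`Δu` to `-4π𝔐`.

For the smooth periodic function `N` this is the divergence theorem on the parallelogram, in lattice
coordinates, the contributions of opposite edges cancelling (`VortexData.integral_lap_eq_zero`). For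
`u`, the harmonic function `ln |x - pᵢ|` is replaced near each vortex point by a smooth radial
function `k (|x - pᵢ|²)` (`IsMCSSolution.exists_regularization`). The resulting `w` is `C²` on the
closed cell and equals `u` near its edges, so `Δw` integrates to `0`, while `Δw - Δu` is a sum of
radial bumps `2 mᵢ Δ(k (|x - pᵢ|²))`, each of mass `2 mᵢ · 2π`, the mass of a regularized point
source (`integral_lap_reg`).

The second identity then follows from the pointwise bound `N ≤ λ`, obtained by comparing the two
equations at the maxima of `u` and of `N` (`IsMCSSolution.N_le`). The maximum of `u` is found as that
of `e^u`, which is continuous on the torus and vanishes exactly at the vortex points.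
-/

open MeasureTheory Real Filter Metric Set

noncomputable section

/-- The plane `ℝ²`. -/
abbrev R2 : Type := EuclideanSpace ℝ (Fin 2)

/-- The Laplacian `Δf = ∂²f/∂x₁² + ∂²f/∂x₂²`. -/
def lap (f : R2 → ℝ) (x : R2) : ℝ :=
  ∑ i : Fin 2,
    fderiv ℝ (fun y => fderiv ℝ f y (EuclideanSpace.single i 1)) x (EuclideanSpace.single i 1)

/-- The lattice `Λ = ℤa₁ + ℤa₂`. -/
def lattice (a1 a2 : R2) : Set R2 := {x | ∃ k l : ℤ, x = (k : ℝ) • a1 + (l : ℝ) • a2}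

/-- The fundamental cell `Ω = {t₁a₁ + t₂a₂ : 0 < t₁, t₂ < 1}`. -/
def cell (a1 a2 : R2) : Set R2 :=
  {x | ∃ t1 t2 : ℝ, t1 ∈ Set.Ioo (0:ℝ) 1 ∧ t2 ∈ Set.Ioo (0:ℝ) 1 ∧ x = t1 • a1 + t2 • a2}

/-- `Λ`-periodicity of a function on `ℝ²`. -/
def Periodic2 (a1 a2 : R2) (f : R2 → ℝ) : Prop :=
  ∀ x : R2, ∀ w ∈ lattice a1 a2, f (x + w) = f x

/-- The torus and vortex data: a lattice with fundamental cell of area 1, and distinct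
vortex points `p₁, …, pₙ ∈ Ω` with positive multiplicities `m₁, …, mₙ`. -/
structure VortexData where
  a1 : R2
  a2 : R2
  indep : LinearIndependent ℝ ![a1, a2]
  area_one : volume (cell a1 a2) = 1
  n : ℕ
  p : Fin n → R2
  m : Fin n → ℕ
  m_pos : ∀ i, 0 < m i
  p_mem : ∀ i, p i ∈ cell a1 a2
  p_inj : Function.Injective p

/-- The singular set `Z + Λ`. -/
def VortexData.sing (D : VortexData) : Set R2 :=
  {x | ∃ i : Fin D.n, ∃ w ∈ lattice D.a1 D.a2, x = D.p i + w}

/-- The total vortex number `𝔐 = Σᵢ mᵢ`. -/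
def VortexData.M (D : VortexData) : ℝ := ∑ i, (D.m i : ℝ)

open Classical in
/-- `e^u`, extended continuously by the value `0` on `Z + Λ`. -/
def VortexData.expu (D : VortexData) (u : R2 → ℝ) (x : R2) : ℝ :=
  if x ∈ D.sing then 0 else Real.exp (u x)

/-- `(u, N)` is a solution of the Maxwell–Chern–Simons vortex equations with
parameters `λ, μ`:  `u`, `N` are `Λ`-periodic, `u` is smooth away from `Z + Λ` with the
prescribed logarithmic behaviour `u(x) = 2mᵢ ln|x − pᵢ| + smooth` near each vortex point,
`N` is smooth, and the equations `Δu = λμ eᵘ − μN` (away from `Z + Λ`) and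
`ΔN = μ(μ + λeᵘ)N − λμ(μ + λ)eᵘ` (everywhere, with `eᵘ` extended by `0` on `Z + Λ`)
hold pointwise. -/
def IsMCSSolution (D : VortexData) (lam mu : ℝ) (u N : R2 → ℝ) : Prop :=
  Periodic2 D.a1 D.a2 u ∧ Periodic2 D.a1 D.a2 N ∧
  ContDiffOn ℝ (⊤ : ℕ∞) u D.singᶜ ∧ ContDiff ℝ (⊤ : ℕ∞) N ∧
  (∀ i : Fin D.n, ∃ ε > (0:ℝ), ∃ v : R2 → ℝ, ContDiffOn ℝ (⊤ : ℕ∞) v (Metric.ball (D.p i) ε) ∧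
    ∀ x ∈ Metric.ball (D.p i) ε, x ≠ D.p i →
      u x = v x + 2 * (D.m i : ℝ) * Real.log ‖x - D.p i‖) ∧
  (∀ x ∉ D.sing, lap u x = lam * mu * Real.exp (u x) - mu * N x) ∧
  (∀ x : R2, lap N x = mu * (mu + lam * D.expu u x) * N x - lam * mu * (mu + lam) * D.expu u x)

/-! ### The Laplacian: local rules -/

lemma lap_congr {f g : R2 → ℝ} {x : R2} (h : f =ᶠ[nhds x] g) : lap f x = lap g x := by
  unfold lap
  refine Finset.sum_congr rfl fun i _ => ?_
  have h2 : (fun y => fderiv ℝ f y (EuclideanSpace.single i 1)) =ᶠ[nhds x]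
      fun y => fderiv ℝ g y (EuclideanSpace.single i 1) := by
    filter_upwards [h.eventuallyEq_nhds] with y hy
    rw [hy.fderiv_eq]
  rw [h2.fderiv_eq]

lemma contDiffAt_fderiv_apply {f : R2 → ℝ} {x : R2} (hf : ContDiffAt ℝ 2 f x) (e : R2) :
    ContDiffAt ℝ 1 (fun y => fderiv ℝ f y e) x :=
  (hf.fderiv_right (m := 1) (by norm_num)).clm_apply contDiffAt_const

lemma eventually_differentiableAt {f : R2 → ℝ} {x : R2} (hf : ContDiffAt ℝ 2 f x) :
    ∀ᶠ y in nhds x, DifferentiableAt ℝ f y := by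
  filter_upwards [hf.eventually (by simp)] with y hy
  exact hy.differentiableAt (by simp)

lemma lap_add {f g : R2 → ℝ} {x : R2} (hf : ContDiffAt ℝ 2 f x) (hg : ContDiffAt ℝ 2 g x) :
    lap (fun y => f y + g y) x = lap f x + lap g x := by
  unfold lap
  rw [← Finset.sum_add_distrib]
  refine Finset.sum_congr rfl fun i _ => ?_
  have h2 : (fun y => fderiv ℝ (fun y => f y + g y) y (EuclideanSpace.single i 1)) =ᶠ[nhds x]
      fun y => fderiv ℝ f y (EuclideanSpace.single i 1) +
        fderiv ℝ g y (EuclideanSpace.single i 1) := by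
    filter_upwards [eventually_differentiableAt hf, eventually_differentiableAt hg] with y h1 h2
    rw [fderiv_fun_add h1 h2]; rfl
  rw [h2.fderiv_eq, fderiv_fun_add
    ((contDiffAt_fderiv_apply hf _).differentiableAt (by simp))
    ((contDiffAt_fderiv_apply hg _).differentiableAt (by simp))]
  rfl

lemma lap_const_mul {f : R2 → ℝ} {x : R2} (hf : ContDiffAt ℝ 2 f x) (c : ℝ) :
    lap (fun y => c * f y) x = c * lap f x := by
  unfold lap
  rw [Finset.mul_sum]
  refine Finset.sum_congr rfl fun i _ => ?_
  have h2 : (fun y => fderiv ℝ (fun y => c * f y) y (EuclideanSpace.single i 1)) =ᶠ[nhds x]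
      fun y => c * fderiv ℝ f y (EuclideanSpace.single i 1) := by
    filter_upwards [eventually_differentiableAt hf] with y h1
    rw [fderiv_const_mul h1]; rfl
  rw [h2.fderiv_eq, fderiv_const_mul
    ((contDiffAt_fderiv_apply hf _).differentiableAt (by simp))]
  rfl

/-- The Laplacian of a radial function, written in terms of the squared distance. -/
lemma lap_radial {k : ℝ → ℝ} (p x : R2) (hk : ContDiffAt ℝ 2 k (‖x - p‖ ^ 2)) :
    lap (fun y => k (‖y - p‖ ^ 2)) x =
      4 * ‖x - p‖ ^ 2 * deriv (deriv k) (‖x - p‖ ^ 2) + 4 * deriv k (‖x - p‖ ^ 2) := by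
  have hs : ∀ y : R2, HasFDerivAt (fun y : R2 => ‖y - p‖ ^ 2)
      (2 • (innerSL ℝ (y - p)) : R2 →L[ℝ] ℝ) y := by
    intro y
    have := ((hasFDerivAt_id y).sub_const p).norm_sq
    simpa using this
  have hc : ContinuousAt (fun y : R2 => ‖y - p‖ ^ 2) x := (hs x).continuousAt
  have hev : ∀ᶠ y in nhds x, DifferentiableAt ℝ k (‖y - p‖ ^ 2) := by
    filter_upwards [hc.eventually (hk.eventually (by simp))] with y hy
    exact hy.differentiableAt (by simp)
  have hk' : DifferentiableAt ℝ (deriv k) (‖x - p‖ ^ 2) := by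
    have h1 : ContDiffAt ℝ 1 (fun s => fderiv ℝ k s 1) (‖x - p‖ ^ 2) :=
      (hk.fderiv_right (m := 1) (by norm_num)).clm_apply contDiffAt_const
    have : (fun s => fderiv ℝ k s 1) = deriv k := by ext s; simp
    rw [this] at h1
    exact h1.differentiableAt (by simp)
  have key : ∀ i : Fin 2, fderiv ℝ (fun y => fderiv ℝ (fun y => k (‖y - p‖ ^ 2)) y
      (EuclideanSpace.single i 1)) x (EuclideanSpace.single i 1) =
      4 * ((x - p) i) ^ 2 * deriv (deriv k) (‖x - p‖ ^ 2) + 2 * deriv k (‖x - p‖ ^ 2) := by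
    intro i
    have h1 : (fun y => fderiv ℝ (fun y => k (‖y - p‖ ^ 2)) y
        (EuclideanSpace.single i 1)) =ᶠ[nhds x]
        fun y => deriv k (‖y - p‖ ^ 2) * (2 * (y i - p i)) := by
      filter_upwards [hev] with y hy
      have := (hy.hasDerivAt.comp_hasFDerivAt y (hs y)).fderiv
      change fderiv ℝ (fun y => k (‖y - p‖ ^ 2)) y = _ at this
      rw [this]
      simp [EuclideanSpace.inner_single_right]
    rw [h1.fderiv_eq]
    have h2 := hk'.hasDerivAt.comp_hasFDerivAt x (hs x)
    have h3 : HasFDerivAt (fun y : R2 => 2 * (y i - p i))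
        ((2:ℝ) • (EuclideanSpace.proj i : R2 →L[ℝ] ℝ)) x :=
      (((EuclideanSpace.proj i : R2 →L[ℝ] ℝ).hasFDerivAt).sub_const (p i)).const_mul 2
    have := (h2.mul h3).fderiv
    change fderiv ℝ (fun y => deriv k (‖y - p‖ ^ 2) * (2 * (y i - p i))) x = _ at this
    rw [this]
    simp [EuclideanSpace.inner_single_right]
    ring
  unfold lap
  rw [Fin.sum_univ_two, key, key, EuclideanSpace.norm_sq_eq (x - p), Fin.sum_univ_two]
  simp only [Real.norm_eq_abs, sq_abs]
  ring

lemma deriv_half_log {s : ℝ} : deriv (fun t : ℝ => Real.log t / 2) s = s⁻¹ / 2 := by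
  simp

/-- `ln |x - p|` is harmonic away from `p`. -/
lemma lap_log (p x : R2) (hx : x ≠ p) : lap (fun y => Real.log (‖y - p‖ ^ 2) / 2) x = 0 := by
  have h0 : ‖x - p‖ ^ 2 ≠ 0 := by
    simpa [sub_eq_zero] using hx
  rw [lap_radial (k := fun t => Real.log t / 2) p x
    ((Real.contDiffAt_log.2 h0).div_const 2)]
  have : deriv (fun t : ℝ => Real.log t / 2) = fun s => s⁻¹ / 2 := by
    ext s; exact deriv_half_log
  rw [this]
  simp only [deriv_div_const, deriv_inv]
  field_simp
  ring

/-- At an interior maximum the Laplacian is nonpositive. -/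
lemma lap_nonpos_of_isLocalMax {f : R2 → ℝ} {x : R2} (hf : ContDiffAt ℝ 2 f x)
    (hm : IsLocalMax f x) : lap f x ≤ 0 := by
  unfold lap
  refine Finset.sum_nonpos fun i _ => ?_
  set e : R2 := EuclideanSpace.single i 1
  by_contra! hpos
  -- Restrict to the line through `x` in the direction `e`.
  set φ : ℝ → ℝ := fun t => f (x + t • e)
  have hl : ∀ t : ℝ, HasDerivAt (fun t : ℝ => x + t • e) e t := by
    intro t
    simpa using ((hasDerivAt_id t).smul_const e).const_add x
  have hx0 : x + (0:ℝ) • e = x := by simp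
  have hcl : Tendsto (fun t : ℝ => x + t • e) (nhds 0) (nhds x) := by
    have := (hl 0).continuousAt.tendsto
    rwa [hx0] at this
  have hd : deriv φ =ᶠ[nhds 0] fun t => fderiv ℝ f (x + t • e) e := by
    filter_upwards [hcl.eventually (eventually_differentiableAt hf)] with t ht
    exact (ht.hasFDerivAt.comp_hasDerivAt t (hl t)).deriv
  have hdd : deriv (deriv φ) 0 = fderiv ℝ (fun y => fderiv ℝ f y e) x e := by
    rw [hd.deriv_eq]
    have h1 : DifferentiableAt ℝ (fun y => fderiv ℝ f y e) (x + (0:ℝ) • e) := by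
      rw [hx0]; exact (contDiffAt_fderiv_apply hf e).differentiableAt (by simp)
    have := (h1.hasFDerivAt.comp_hasDerivAt (0:ℝ) (hl 0)).deriv
    rw [hx0] at this
    exact this
  have hmax : IsLocalMax φ 0 := by
    have := hcl.eventually hm
    filter_upwards [this] with t ht
    simpa [φ] using ht
  have hcφ : ContinuousAt φ 0 := by
    have h1 : ContinuousAt f (x + (0:ℝ) • e) := by rw [hx0]; exact hf.continuousAt
    exact ContinuousAt.comp (f := fun t : ℝ => x + t • e) h1 (hl 0).continuousAt
  have hmin : IsLocalMin φ 0 :=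
    isLocalMin_of_deriv_deriv_pos (by rw [hdd]; exact hpos) hmax.deriv_eq_zero hcφ
  -- A point that is both a local maximum and a local minimum has a neighbourhood of constancy.
  have hconst : φ =ᶠ[nhds 0] fun _ => φ 0 := by
    filter_upwards [hmax, hmin] with t h1 h2
    exact le_antisymm h1 h2
  have : deriv (deriv φ) 0 = 0 := by
    have h1 : deriv φ =ᶠ[nhds 0] fun _ => 0 := by
      filter_upwards [hconst.eventuallyEq_nhds] with t ht
      rw [ht.deriv_eq]; simp
    rw [h1.deriv_eq]; simp
  rw [hdd] at this
  linarith

lemma continuousAt_lap {f : R2 → ℝ} {x : R2} (hf : ContDiffAt ℝ 2 f x) :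
    ContinuousAt (lap f) x := by
  have : lap f = fun x => ∑ i : Fin 2,
    fderiv ℝ (fun y => fderiv ℝ f y (EuclideanSpace.single i 1)) x
      (EuclideanSpace.single i 1) := rfl
  rw [this]
  refine tendsto_finsetSum _ fun i _ => ?_
  have h1 := contDiffAt_fderiv_apply hf (EuclideanSpace.single i 1)
  have h2 : ContDiffAt ℝ 0 (fun x => fderiv ℝ (fun y => fderiv ℝ f y
    (EuclideanSpace.single i 1)) x (EuclideanSpace.single i 1)) x :=
    (h1.fderiv_right (m := 0) (by norm_num)).clm_apply contDiffAt_const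
  exact h2.continuousAt

/-- There are `C²` regularizations of `(ln s) / 2` at the origin. -/
lemma exists_smooth_log (δ : ℝ) (hδ : 0 < δ) :
    ∃ k : ℝ → ℝ, ContDiff ℝ 2 k ∧ ∀ s, δ ≤ s → k s = Real.log s / 2 := by
  refine ⟨fun s => Real.smoothTransition (2 * s / δ - 1) * (Real.log s / 2), ?_, ?_⟩
  · rw [contDiff_iff_contDiffAt]
    intro s
    by_cases hs : s < δ / 2
    · have : (fun s => Real.smoothTransition (2 * s / δ - 1) * (Real.log s / 2))
          =ᶠ[nhds s] fun _ => 0 := by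
        filter_upwards [Iio_mem_nhds hs] with t ht
        rw [Real.smoothTransition.zero_of_nonpos, zero_mul]
        rw [sub_nonpos, div_le_one hδ]
        have : t < δ / 2 := ht
        linarith
      exact contDiffAt_const.congr_of_eventuallyEq this
    · have hs0 : s ≠ 0 := by
        have : 0 < s := by linarith [not_lt.1 hs]
        exact this.ne'
      refine ContDiffAt.mul ?_ ((Real.contDiffAt_log.2 hs0).div_const 2)
      exact Real.smoothTransition.contDiffAt.comp s (by fun_prop)
  · intro s hs
    beta_reduce
    rw [Real.smoothTransition.one_of_one_le, one_mul]
    rw [le_sub_iff_add_le, le_div_iff₀ hδ]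
    linarith

/-! ### The regularized logarithm -/

/-- If `k` is a regularization of `(ln s) / 2`, the Laplacian of `x ↦ k (|x|²)` vanishes outside
the disc where `k` was modified. -/
lemma lap_reg_eq_zero {k : ℝ → ℝ} {r : ℝ} (hr : 0 < r)
    (hlog : ∀ s, r ^ 2 ≤ s → k s = Real.log s / 2) (p x : R2) (hx : r < ‖x - p‖) :
    lap (fun y => k (‖y - p‖ ^ 2)) x = 0 := by
  have hxp : x ≠ p := by
    rintro rfl
    simp at hx; linarith
  rw [← lap_log p x hxp]
  apply lap_congr
  have hc : Continuous fun y : R2 => ‖y - p‖ := by fun_prop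
  filter_upwards [hc.continuousAt.eventually (lt_mem_nhds hx)] with y hy
  exact hlog _ (by gcongr)

/-- The mass of the logarithm's point source: `Δ ln|x| = 2π δ₀`, seen through a regularization. In
polar coordinates the integrand is the derivative of `2 r² k'(r²)`, which is `0` at the origin and
`1` far away. -/
lemma integral_lap_reg {k : ℝ → ℝ} (hk : ContDiff ℝ 2 k) {r : ℝ} (hr : 0 < r)
    (hlog : ∀ s, r ^ 2 ≤ s → k s = Real.log s / 2) (p : R2) :
    ∫ x : R2, lap (fun y => k (‖y - p‖ ^ 2)) x = 2 * π := by
  have hk1 : ContDiff ℝ 1 (deriv k) :=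
    (contDiff_succ_iff_deriv (n := 1)).1 (by rw [one_add_one_eq_two]; exact hk) |>.2.2
  have hk2 : Continuous (deriv (deriv k)) := hk1.continuous_deriv (by simp)
  set f : ℝ → ℝ := fun y => 4 * y ^ 2 * deriv (deriv k) (y ^ 2) + 4 * deriv k (y ^ 2) with hf
  have h1 : ∀ x : R2, lap (fun y => k (‖y - p‖ ^ 2)) x = f ‖x - p‖ := fun x =>
    lap_radial p x hk.contDiffAt
  simp_rw [h1]
  rw [integral_sub_right_eq_self (fun x : R2 => f ‖x‖) p, integral_fun_norm_addHaar]
  have hG : ∀ y : ℝ, HasDerivAt (fun y : ℝ => 2 * y ^ 2 * deriv k (y ^ 2)) (y * f y) y := by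
    intro y
    have hsq : HasDerivAt (fun y : ℝ => y ^ 2) (2 * y) y := by simpa using hasDerivAt_pow 2 y
    have h2 : HasDerivAt (deriv k) (deriv (deriv k) (y ^ 2)) (y ^ 2) :=
      ((hk1.differentiable (by simp)) _).hasDerivAt
    have := (hsq.const_mul 2).mul (h2.comp (h := fun y : ℝ => y ^ 2) y hsq)
    refine this.congr_deriv ?_
    simp only [hf, Function.comp]
    ring
  have hfc : Continuous f := by
    have := hk1.continuous
    simp only [hf]; fun_prop
  -- Far out `k' s = 1 / (2 s)`.
  have hkd : ∀ s, r ^ 2 < s → deriv k s = s⁻¹ / 2 := by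
    intro s hs
    rw [← deriv_half_log]
    refine Filter.EventuallyEq.deriv_eq ?_
    filter_upwards [lt_mem_nhds hs] with t ht
    exact hlog t ht.le
  have hf0 : ∀ y, 2 * r ≤ y → f y = 0 := by
    intro y hy
    have hy2 : r ^ 2 < y ^ 2 := by nlinarith
    have hdd : deriv (deriv k) (y ^ 2) = -((y ^ 2) ^ 2)⁻¹ / 2 := by
      have : deriv k =ᶠ[nhds (y ^ 2)] fun s => s⁻¹ / 2 := by
        filter_upwards [lt_mem_nhds hy2] with t ht using hkd t ht
      rw [this.deriv_eq]
      simp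
    have hy0 : y ≠ 0 := by linarith
    simp only [hf, hdd, hkd _ hy2]
    field_simp
    ring
  have hint : ∫ y in Ioi (0:ℝ), y ^ 1 * f y = 1 := by
    have hsplit : ∫ y in Ioi (0:ℝ), y ^ 1 * f y = ∫ y in Ioc (0:ℝ) (2 * r), y ^ 1 * f y := by
      refine setIntegral_eq_of_subset_of_forall_sdiff_eq_zero measurableSet_Ioi
        Ioc_subset_Ioi_self fun y hy => ?_
      rw [hf0 y, mul_zero]
      by_contra! h
      exact hy.2 ⟨hy.1, h.le⟩
    rw [hsplit, ← intervalIntegral.integral_of_le (by positivity)]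
    simp only [pow_one]
    rw [intervalIntegral.integral_eq_sub_of_hasDerivAt (fun y _ => hG y)
      ((continuous_id.mul hfc).intervalIntegrable _ _)]
    rw [hkd ((2 * r) ^ 2) (by nlinarith)]
    field_simp
    ring
  have hvol : (volume : Measure R2).real (ball 0 1) = π := by
    simp [Measure.real, EuclideanSpace.volume_ball_fin_two, Real.pi_nonneg]
  rw [hvol]
  simp only [finrank_euclideanSpace, Fintype.card_fin, Nat.add_one_sub_one, smul_eq_mul, nsmul_eq_mul]
  rw [hint]
  simp

lemma continuous_lap_reg {k : ℝ → ℝ} (hk : ContDiff ℝ 2 k) (p : R2) :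
    Continuous (lap fun y => k (‖y - p‖ ^ 2)) := by
  rw [continuous_iff_continuousAt]
  intro x
  refine continuousAt_lap (ContDiff.contDiffAt ?_)
  exact hk.comp ((contDiff_id.sub contDiff_const).norm_sq ℝ)

/-! ### The fundamental cell and the divergence theorem -/

/-- The linear isomorphism `(t₁, t₂) ↦ t₁ a₁ + t₂ a₂`, which carries the unit square to the
fundamental cell and `ℤ²` to the lattice. -/
def VortexData.L (D : VortexData) : (ℝ × ℝ) ≃L[ℝ] R2 :=
  (LinearEquiv.ofInjectiveOfFinrankEq
    ((LinearMap.fst ℝ ℝ ℝ).smulRight D.a1 + (LinearMap.snd ℝ ℝ ℝ).smulRight D.a2)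
    (by
      rw [← LinearMap.ker_eq_bot, LinearMap.ker_eq_bot']
      rintro ⟨s, t⟩ h
      have := LinearIndependent.pair_iff.1 D.indep s t (by simpa using h)
      simp [this.1, this.2])
    (by simp)).toContinuousLinearEquiv

lemma VortexData.L_apply (D : VortexData) (t : ℝ × ℝ) : D.L t = t.1 • D.a1 + t.2 • D.a2 := rfl

/-- The closed fundamental cell. -/
def VortexData.K (D : VortexData) : Set R2 := D.L '' Icc (0, 0) (1, 1)

lemma VortexData.isCompact_K (D : VortexData) : IsCompact D.K :=
  isCompact_Icc.image D.L.continuous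

lemma VortexData.cell_eq (D : VortexData) : cell D.a1 D.a2 = D.L '' (Ioo 0 1 ×ˢ Ioo 0 1) := by
  ext x
  constructor
  · rintro ⟨t1, t2, h1, h2, rfl⟩
    exact ⟨(t1, t2), ⟨h1, h2⟩, rfl⟩
  · rintro ⟨⟨t1, t2⟩, ⟨h1, h2⟩, rfl⟩
    exact ⟨t1, t2, h1, h2, rfl⟩

lemma VortexData.cell_subset_K (D : VortexData) : cell D.a1 D.a2 ⊆ D.K := by
  rw [D.cell_eq]
  refine image_mono ?_
  rintro ⟨s, t⟩ ⟨h1, h2⟩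
  exact ⟨⟨h1.1.le, h2.1.le⟩, ⟨h1.2.le, h2.2.le⟩⟩

lemma VortexData.isOpen_cell (D : VortexData) : IsOpen (cell D.a1 D.a2) := by
  rw [D.cell_eq]
  exact D.L.toHomeomorph.isOpenMap _ (isOpen_Ioo.prod isOpen_Ioo)

lemma VortexData.mem_lattice (D : VortexData) {w : R2} :
    w ∈ lattice D.a1 D.a2 ↔ ∃ k l : ℤ, w = D.L ((k : ℝ), (l : ℝ)) := Iff.rfl

lemma VortexData.isClosed_lattice (D : VortexData) : IsClosed (lattice D.a1 D.a2) := by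
  have : lattice D.a1 D.a2 =
      D.L '' (range ((↑) : ℤ → ℝ) ×ˢ range ((↑) : ℤ → ℝ)) := by
    ext w
    rw [D.mem_lattice]
    constructor
    · rintro ⟨k, l, rfl⟩
      exact ⟨_, ⟨⟨k, rfl⟩, ⟨l, rfl⟩⟩, rfl⟩
    · rintro ⟨⟨_, _⟩, ⟨⟨k, rfl⟩, ⟨l, rfl⟩⟩, rfl⟩
      exact ⟨k, l, rfl⟩
  rw [this]
  have h := Int.isClosedEmbedding_coe_real.isClosed_range
  exact D.L.toHomeomorph.isClosedMap _ (h.prod h)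

lemma VortexData.isClosed_sing (D : VortexData) : IsClosed D.sing := by
  have : D.sing = ⋃ i, (fun x => x - D.p i) ⁻¹' lattice D.a1 D.a2 := by
    ext x
    simp only [VortexData.sing, mem_ofPred_eq, mem_iUnion, mem_preimage]
    refine exists_congr fun i => ⟨?_, fun h => ⟨_, h, by abel⟩⟩
    rintro ⟨w, hw, rfl⟩
    simpa using hw
  rw [this]
  exact isClosed_iUnion_of_finite fun i =>
    D.isClosed_lattice.preimage (continuous_id.sub continuous_const)

/-- The only singular points in the closed cell are the vortex points themselves. -/
lemma VortexData.exists_eq_p (D : VortexData) {x : R2} (hx : x ∈ D.K) (hs : x ∈ D.sing) :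
    ∃ i, x = D.p i := by
  obtain ⟨i, w, hw, rfl⟩ := hs
  refine ⟨i, ?_⟩
  obtain ⟨k, l, rfl⟩ := D.mem_lattice.1 hw
  have hp := D.p_mem i
  rw [D.cell_eq] at hp
  obtain ⟨⟨s, t⟩, ⟨⟨h1, h2⟩, ⟨h3, h4⟩⟩, hst⟩ := hp
  obtain ⟨⟨s', t'⟩, ⟨⟨h5, h6⟩, ⟨h7, h8⟩⟩, hst'⟩ := hx
  rw [← hst, ← map_add] at hst'
  have := D.L.injective hst'
  simp only [Prod.mk_add_mk, Prod.mk.injEq] at this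
  simp only at h1 h2 h3 h4 h5 h6 h7 h8
  have hk1 : (-1:ℝ) < k := by linarith
  have hk2 : (k:ℝ) < 1 := by linarith
  have hl1 : (-1:ℝ) < l := by linarith
  have hl2 : (l:ℝ) < 1 := by linarith
  have hk : k = 0 := by
    have : (-1 : ℤ) < k := by exact_mod_cast hk1
    have : k < (1 : ℤ) := by exact_mod_cast hk2
    omega
  have hl : l = 0 := by
    have : (-1 : ℤ) < l := by exact_mod_cast hl1
    have : l < (1 : ℤ) := by exact_mod_cast hl2
    omega
  subst hk hl
  have : ((((0:ℤ):ℝ), ((0:ℤ):ℝ)) : ℝ × ℝ) = 0 := by simp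
  rw [this, map_zero, add_zero]

/-- Every point is a lattice translate of a point of the closed cell. -/
lemma VortexData.exists_translate (D : VortexData) (x : R2) :
    ∃ y ∈ D.K, ∃ w ∈ lattice D.a1 D.a2, x = y + w := by
  obtain ⟨⟨s, t⟩, rfl⟩ := D.L.surjective x
  refine ⟨D.L (Int.fract s, Int.fract t), ⟨_, ⟨⟨Int.fract_nonneg _, Int.fract_nonneg _⟩,
    ⟨(Int.fract_lt_one _).le, (Int.fract_lt_one _).le⟩⟩, rfl⟩,
    D.L ((⌊s⌋ : ℝ), (⌊t⌋ : ℝ)), D.mem_lattice.2 ⟨_, _, rfl⟩, ?_⟩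
  rw [← map_add]
  simp [Int.fract_add_floor]

lemma VortexData.add_mem_lattice (D : VortexData) {v w : R2} (hv : v ∈ lattice D.a1 D.a2)
    (hw : w ∈ lattice D.a1 D.a2) : v + w ∈ lattice D.a1 D.a2 := by
  obtain ⟨k, l, rfl⟩ := D.mem_lattice.1 hv
  obtain ⟨k', l', rfl⟩ := D.mem_lattice.1 hw
  refine D.mem_lattice.2 ⟨k + k', l + l', ?_⟩
  rw [← map_add]; simp

lemma VortexData.neg_mem_lattice (D : VortexData) {v : R2} (hv : v ∈ lattice D.a1 D.a2) :
    -v ∈ lattice D.a1 D.a2 := by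
  obtain ⟨k, l, rfl⟩ := D.mem_lattice.1 hv
  refine D.mem_lattice.2 ⟨-k, -l, ?_⟩
  rw [← map_neg]; simp

lemma VortexData.sing_add (D : VortexData) {x w : R2} (hw : w ∈ lattice D.a1 D.a2) :
    x + w ∈ D.sing ↔ x ∈ D.sing := by
  constructor
  · rintro ⟨i, v, hv, h⟩
    refine ⟨i, v + -w, D.add_mem_lattice hv (D.neg_mem_lattice hw), ?_⟩
    rw [← add_assoc, ← h]; abel
  · rintro ⟨i, v, hv, rfl⟩
    exact ⟨i, v + w, D.add_mem_lattice hv hw, by abel⟩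

lemma VortexData.p_mem_sing (D : VortexData) (i : Fin D.n) : D.p i ∈ D.sing :=
  ⟨i, 0, D.mem_lattice.2 ⟨0, 0, by
    have : ((((0:ℤ):ℝ), ((0:ℤ):ℝ)) : ℝ × ℝ) = 0 := by simp
    rw [this, map_zero]⟩, by simp⟩

lemma VortexData.measurePreserving_L (D : VortexData) : MeasurePreserving D.L := by
  refine ⟨D.L.continuous.measurable, ?_⟩
  have : (volume.map D.L).IsAddHaarMeasure := D.L.isAddHaarMeasure_map volume
  have h := Measure.isAddLeftInvariant_eq_smul (volume.map D.L) (volume : Measure R2)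
  -- The scaling factor is read off from the fundamental cell, which has area one.
  have h1 : (volume.map D.L) (cell D.a1 D.a2) = 1 := by
    rw [Measure.map_apply D.L.continuous.measurable D.isOpen_cell.measurableSet, D.cell_eq,
      D.L.injective.preimage_image, Measure.volume_eq_prod, Measure.prod_prod]
    simp
  rw [h, Measure.smul_apply, D.area_one] at h1
  rw [h]
  have h2 : Measure.addHaarScalarFactor (volume.map D.L) (volume : Measure R2) = 1 := by
    simpa [ENNReal.smul_def] using h1
  rw [h2, one_smul]

/-- The boundary of the cell is null. -/
lemma VortexData.cell_ae_eq_K (D : VortexData) : cell D.a1 D.a2 =ᵐ[volume] D.K := by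
  have h := D.measurePreserving_L
  have hc : cell D.a1 D.a2 = D.L.symm ⁻¹' (Ioo 0 1 ×ˢ Ioo 0 1) := by
    rw [D.cell_eq]; exact D.L.toEquiv.image_eq_preimage_symm _
  have hK : D.K = D.L.symm ⁻¹' (Icc (0, 0) (1, 1)) :=
    D.L.toEquiv.image_eq_preimage_symm _
  have hsymm : MeasurePreserving D.L.symm :=
    h.symm D.L.toHomeomorph.toMeasurableEquiv
  rw [hc, hK, ← Icc_prod_Icc]
  exact hsymm.quasiMeasurePreserving.preimage_ae_eq
    (Measure.set_prod_ae_eq Ioo_ae_eq_Icc Ioo_ae_eq_Icc)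

/-- **Divergence theorem on the torus**, for the gradient field of `W`: if `W` is `C²` near the
closed cell and its gradient agrees on opposite edges, then `ΔW` integrates to zero. -/
lemma VortexData.integral_lap_eq_zero (D : VortexData) {W : R2 → ℝ}
    (hW : ∀ x ∈ D.K, ContDiffAt ℝ 2 W x)
    (h1 : ∀ t ∈ Icc (0:ℝ) 1, fderiv ℝ W (D.L (1, t)) = fderiv ℝ W (D.L (0, t)))
    (h2 : ∀ t ∈ Icc (0:ℝ) 1, fderiv ℝ W (D.L (t, 1)) = fderiv ℝ W (D.L (t, 0))) :
    ∫ x in cell D.a1 D.a2, lap W x = 0 := by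
  -- The divergence is taken in the coordinates `t`; `b i` holds the coordinates of `∂ᵢ`.
  set b : Fin 2 → ℝ × ℝ := fun i => D.L.symm (EuclideanSpace.single i 1)
  set H : Fin 2 → R2 → ℝ := fun i y => fderiv ℝ W y (EuclideanSpace.single i 1)
  have hH : ∀ i, ∀ t ∈ Icc ((0:ℝ), (0:ℝ)) (1, 1),
      HasFDerivAt (fun t => H i (D.L t)) ((fderiv ℝ (H i) (D.L t)).comp (D.L : ℝ × ℝ →L[ℝ] R2)) t := by
    intro i t ht
    have : DifferentiableAt ℝ (H i) (D.L t) :=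
      (contDiffAt_fderiv_apply (hW _ ⟨t, ht, rfl⟩) _).differentiableAt (by simp)
    exact this.hasFDerivAt.comp t D.L.hasFDerivAt
  have hI : ∀ t : ℝ × ℝ, t ∈ Ioo (0:ℝ) 1 ×ˢ Ioo (0:ℝ) 1 → t ∈ Icc ((0:ℝ), (0:ℝ)) (1, 1) :=
    fun t ht => ⟨⟨ht.1.1.le, ht.2.1.le⟩, ⟨ht.1.2.le, ht.2.2.le⟩⟩
  have hlap : ∀ t : ℝ × ℝ, lap W (D.L t) =
      (∑ i, (b i).1 • ((fderiv ℝ (H i) (D.L t)).comp (D.L : ℝ × ℝ →L[ℝ] R2))) (1, 0) +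
      (∑ i, (b i).2 • ((fderiv ℝ (H i) (D.L t)).comp (D.L : ℝ × ℝ →L[ℝ] R2))) (0, 1) := by
    intro t
    simp only [_root_.sum_apply, _root_.smul_apply,
      ContinuousLinearMap.comp_apply, ← Finset.sum_add_distrib]
    refine Finset.sum_congr rfl fun i _ => ?_
    have : (EuclideanSpace.single i 1 : R2) = D.L ((b i).1 • (1, 0) + (b i).2 • (0, 1)) := by
      simp [b]
    change fderiv ℝ (H i) (D.L t) (EuclideanSpace.single i 1) = _
    rw [this, map_add, map_smul, map_smul, map_add, map_smul, map_smul]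
    rfl
  have hcont : ContinuousOn (lap W) D.K := fun x hx =>
    (continuousAt_lap (hW x hx)).continuousWithinAt
  have hcont' : ContinuousOn (fun t => lap W (D.L t)) (Icc (0, 0) (1, 1)) :=
    hcont.comp D.L.continuous.continuousOn fun t ht => ⟨t, ht, rfl⟩
  have hdiv := integral_divergence_prod_Icc_of_hasFDerivAt_of_le
    (fun t => ∑ i, (b i).1 • H i (D.L t)) (fun t => ∑ i, (b i).2 • H i (D.L t))
    (fun t => ∑ i, (b i).1 • ((fderiv ℝ (H i) (D.L t)).comp (D.L : ℝ × ℝ →L[ℝ] R2)))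
    (fun t => ∑ i, (b i).2 • ((fderiv ℝ (H i) (D.L t)).comp (D.L : ℝ × ℝ →L[ℝ] R2)))
    (0, 0) (1, 1) (by simp [Prod.le_def])
    (fun t ht => (HasFDerivAt.fun_sum fun i _ =>
      (hH i t ht).const_smul (b i).1).continuousAt.continuousWithinAt)
    (fun t ht => (HasFDerivAt.fun_sum fun i _ =>
      (hH i t ht).const_smul (b i).2).continuousAt.continuousWithinAt)
    (fun t ht => HasFDerivAt.fun_sum fun i _ => (hH i t (hI t ht)).const_smul (b i).1)
    (fun t ht => HasFDerivAt.fun_sum fun i _ => (hH i t (hI t ht)).const_smul (b i).2)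
    (by
      simp_rw [← hlap]
      exact hcont'.integrableOn_compact isCompact_Icc)
  simp_rw [← hlap] at hdiv
  have e1 : ∀ t ∈ uIcc (0:ℝ) 1, ∑ i, (b i).1 • H i (D.L (1, t)) =
      ∑ i, (b i).1 • H i (D.L (0, t)) := by
    intro t ht
    rw [uIcc_of_le zero_le_one] at ht
    simp only [H, h1 t ht]
  have e2 : ∀ t ∈ uIcc (0:ℝ) 1, ∑ i, (b i).2 • H i (D.L (t, 1)) =
      ∑ i, (b i).2 • H i (D.L (t, 0)) := by
    intro t ht
    rw [uIcc_of_le zero_le_one] at ht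
    simp only [H, h2 t ht]
  rw [intervalIntegral.integral_congr e1, intervalIntegral.integral_congr e2] at hdiv
  rw [setIntegral_congr_set D.cell_ae_eq_K]
  have := D.measurePreserving_L.setIntegral_image_emb
    D.L.toHomeomorph.measurableEmbedding (lap W) (Icc (0, 0) (1, 1))
  rw [VortexData.K, this, hdiv]
  ring

/-! ### The maximum principle -/

lemma two_le_smooth : (2 : WithTop ℕ∞) ≤ ((⊤ : ℕ∞) : WithTop ℕ∞) :=
  WithTop.coe_le_coe.2 (le_top : (2 : ℕ∞) ≤ ⊤)

/-- A common radius for disjoint discs about the vortex points, inside the cell, on which `u` splits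
into a smooth part `v i` and the logarithm. -/
lemma IsMCSSolution.local_form {D : VortexData} {lam mu : ℝ} {u N : R2 → ℝ}
    (h : IsMCSSolution D lam mu u N) :
    ∃ ρ > (0:ℝ), ∃ v : Fin D.n → R2 → ℝ,
      (∀ i, ContDiffOn ℝ 2 (v i) (ball (D.p i) ρ)) ∧
      (∀ i, ball (D.p i) ρ ⊆ cell D.a1 D.a2) ∧
      (∀ i j x, x ∈ ball (D.p i) ρ → x ∈ ball (D.p j) ρ → i = j) ∧
      (∀ i, ∀ x ∈ ball (D.p i) ρ, x ≠ D.p i → x ∉ D.sing ∧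
        u x = v i x + 2 * (D.m i : ℝ) * (Real.log (‖x - D.p i‖ ^ 2) / 2)) := by
  obtain ⟨-, -, -, -, hloc, -, -⟩ := h
  choose ε hε v hv hu using hloc
  have e1 : ∀ i, ∀ᶠ ρ in nhdsWithin (0:ℝ) (Ioi 0), ball (D.p i) ρ ⊆ cell D.a1 D.a2 := by
    intro i
    obtain ⟨r, hr, hb⟩ := Metric.isOpen_iff.1 D.isOpen_cell _ (D.p_mem i)
    filter_upwards [Ioo_mem_nhdsGT hr] with ρ hρ
    exact (ball_subset_ball hρ.2.le).trans hb
  have e2 : ∀ i, ∀ᶠ ρ in nhdsWithin (0:ℝ) (Ioi 0), ρ < ε i := by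
    intro i
    filter_upwards [Ioo_mem_nhdsGT (hε i)] with ρ hρ using hρ.2
  have e3 : ∀ i j, ∀ᶠ ρ in nhdsWithin (0:ℝ) (Ioi 0), i ≠ j → 2 * ρ < dist (D.p i) (D.p j) := by
    intro i j
    by_cases hij : i = j
    · simp [hij]
    · have : 0 < dist (D.p i) (D.p j) / 2 := by
        have := dist_pos.2 (D.p_inj.ne hij)
        positivity
      filter_upwards [Ioo_mem_nhdsGT this] with ρ hρ _
      linarith [hρ.2]
  obtain ⟨ρ, h1, h2, h3, h0⟩ := ((eventually_all.2 e1).and ((eventually_all.2 e2).and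
    ((eventually_all.2 fun i => eventually_all.2 (e3 i)).and self_mem_nhdsWithin))).exists
  have hdisj : ∀ i j x, x ∈ ball (D.p i) ρ → x ∈ ball (D.p j) ρ → i = j := by
    intro i j x hi hj
    by_contra hij
    have := h3 i j hij
    rw [mem_ball] at hi hj
    linarith [dist_triangle_left (D.p i) (D.p j) x]
  refine ⟨ρ, h0, v, fun i => ((hv i).mono (ball_subset_ball (h2 i).le)).of_le two_le_smooth,
    h1, hdisj, fun i x hx hne => ⟨fun hs => ?_, ?_⟩⟩
  · obtain ⟨j, rfl⟩ := D.exists_eq_p (D.cell_subset_K (h1 i hx)) hs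
    exact hne (by rw [hdisj i j _ hx (mem_ball_self h0)])
  · rw [hu i x (ball_subset_ball (h2 i).le hx) hne, Real.log_pow]
    push_cast; ring

lemma IsMCSSolution.contDiffAt_u {D : VortexData} {lam mu : ℝ} {u N : R2 → ℝ}
    (h : IsMCSSolution D lam mu u N) {x : R2} (hx : x ∉ D.sing) : ContDiffAt ℝ 2 u x :=
  (h.2.2.1.contDiffAt (D.isClosed_sing.isOpen_compl.mem_nhds hx)).of_le two_le_smooth

lemma expu_of_notMem {D : VortexData} (u : R2 → ℝ) {x : R2} (hx : x ∉ D.sing) :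
    D.expu u x = Real.exp (u x) := if_neg hx

lemma expu_of_mem {D : VortexData} (u : R2 → ℝ) {x : R2} (hx : x ∈ D.sing) :
    D.expu u x = 0 := if_pos hx

lemma expu_nonneg (D : VortexData) (u : R2 → ℝ) (x : R2) : 0 ≤ D.expu u x := by
  unfold VortexData.expu
  split_ifs
  · exact le_rfl
  · positivity

lemma IsMCSSolution.continuousOn_expu {D : VortexData} {lam mu : ℝ} {u N : R2 → ℝ}
    (h : IsMCSSolution D lam mu u N) : ContinuousOn (D.expu u) D.K := by
  intro x hx
  refine ContinuousAt.continuousWithinAt ?_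
  by_cases hs : x ∈ D.sing
  · obtain ⟨i, rfl⟩ := D.exists_eq_p hx hs
    obtain ⟨ρ, h0, v, hv, -, -, hu⟩ := h.local_form
    -- `e^u = e^v |x - p|^(2m)` near the vortex point.
    have hev : D.expu u =ᶠ[nhds (D.p i)] fun x => Real.exp (v i x) * ‖x - D.p i‖ ^ (2 * D.m i) := by
      filter_upwards [ball_mem_nhds _ h0] with y hy
      by_cases hyp : y = D.p i
      · have := (D.m_pos i).ne'
        rw [hyp, expu_of_mem u hs]
        simp [this]
      · obtain ⟨h1, h2⟩ := hu i y hy hyp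
        have hpos : 0 < ‖y - D.p i‖ ^ 2 := by
          have := norm_pos_iff.2 (sub_ne_zero.2 hyp)
          positivity
        rw [expu_of_notMem u h1, h2, Real.exp_add]
        congr 1
        have : 2 * (D.m i : ℝ) * (Real.log (‖y - D.p i‖ ^ 2) / 2) =
            D.m i * Real.log (‖y - D.p i‖ ^ 2) := by ring
        rw [this, Real.exp_nat_mul, Real.exp_log hpos, pow_mul]
    refine ContinuousAt.congr ?_ hev.symm
    have hvc : ContinuousAt (v i) (D.p i) :=
      (hv i).continuousOn.continuousAt (ball_mem_nhds _ h0)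
    fun_prop
  · have hev : D.expu u =ᶠ[nhds x] fun x => Real.exp (u x) := by
      filter_upwards [D.isClosed_sing.isOpen_compl.mem_nhds hs] with y hy
      exact expu_of_notMem u hy
    exact ContinuousAt.congr (h.contDiffAt_u hs).continuousAt.rexp hev.symm

lemma expu_periodic {D : VortexData} {u : R2 → ℝ} (hu : Periodic2 D.a1 D.a2 u) :
    Periodic2 D.a1 D.a2 (D.expu u) := by
  intro x w hw
  by_cases hs : x ∈ D.sing
  · rw [expu_of_mem u hs, expu_of_mem u ((D.sing_add hw).2 hs)]
  · rw [expu_of_notMem u hs, expu_of_notMem u (fun h => hs ((D.sing_add hw).1 h)), hu x w hw]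

lemma VortexData.K_nonempty (D : VortexData) : D.K.Nonempty :=
  ⟨_, (0, 0), ⟨le_rfl, by simp [Prod.le_def]⟩, rfl⟩

/-- A periodic function continuous on the closed cell attains its maximum over the plane. -/
lemma exists_max {D : VortexData} {f : R2 → ℝ} (hf : Periodic2 D.a1 D.a2 f)
    (hc : ContinuousOn f D.K) : ∃ x ∈ D.K, ∀ y, f y ≤ f x := by
  obtain ⟨x, hx, hmax⟩ := D.isCompact_K.exists_isMaxOn D.K_nonempty hc
  refine ⟨x, hx, fun y => ?_⟩
  obtain ⟨z, hz, w, hw, rfl⟩ := D.exists_translate y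
  rw [hf z w hw]
  exact hmax hz

lemma VortexData.exists_notMem_sing (D : VortexData) : ∃ x, x ∉ D.sing := by
  refine ⟨D.L (0, 0), fun hs => ?_⟩
  obtain ⟨i, hi⟩ := D.exists_eq_p ⟨(0, 0), ⟨le_rfl, by simp [Prod.le_def]⟩, rfl⟩ hs
  have := D.p_mem i
  rw [D.cell_eq, ← hi] at this
  obtain ⟨t, ht, hte⟩ := this
  have := D.L.injective hte
  subst this
  exact lt_irrefl _ ht.1.1

/-- **Maximum principle.** Let `E₀` be the maximum of `e^u`, let `N₁` be the maximum of `N`, and let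
`E₁ ≤ E₀` be the value of `e^u` where `N` is maximal. The first equation gives `λ E₀ ≤ N₁`, the second
`(μ + λ E₁) N₁ ≤ λ (μ + λ) E₁`. Together they force `E₁ ≤ 1`, and then the second gives `N₁ ≤ λ`. -/
lemma IsMCSSolution.N_le {D : VortexData} {lam mu : ℝ} (hlam : 0 < lam) (hmu : 0 < mu)
    {u N : R2 → ℝ} (h : IsMCSSolution D lam mu u N) (x : R2) : N x ≤ lam := by
  obtain ⟨x0, hx0, hE⟩ := exists_max (expu_periodic h.1) h.continuousOn_expu
  obtain ⟨x1, hx1, hN⟩ := exists_max h.2.1 h.2.2.2.1.continuous.continuousOn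
  have hE0 : 0 < D.expu u x0 := by
    obtain ⟨y, hy⟩ := D.exists_notMem_sing
    refine lt_of_lt_of_le ?_ (hE y)
    rw [expu_of_notMem u hy]; positivity
  have hs0 : x0 ∉ D.sing := fun hs => by
    rw [expu_of_mem u hs] at hE0; exact lt_irrefl _ hE0
  have hlmax : IsLocalMax u x0 := by
    filter_upwards [D.isClosed_sing.isOpen_compl.mem_nhds hs0] with y hy
    have := hE y
    rwa [expu_of_notMem u hs0, expu_of_notMem u hy, Real.exp_le_exp] at this
  have h1 := lap_nonpos_of_isLocalMax (h.contDiffAt_u hs0) hlmax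
  rw [h.2.2.2.2.2.1 x0 hs0, ← expu_of_notMem u hs0] at h1
  have h2 := lap_nonpos_of_isLocalMax
    ((h.2.2.2.1.contDiffAt (x := x1)).of_le two_le_smooth)
    (Filter.Eventually.of_forall hN)
  rw [h.2.2.2.2.2.2 x1] at h2
  have hE1 := hE x1
  have hE1' := expu_nonneg D u x1
  have hN0 := hN x0
  refine (hN x).trans ?_
  set E0 := D.expu u x0
  set E1 := D.expu u x1
  set N1 := N x1
  have h3 : lam * E0 ≤ N1 := by
    have : mu * (lam * E0) ≤ mu * N x0 := by linarith
    exact (le_of_mul_le_mul_left this hmu).trans hN0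
  have h4 : (mu + lam * E1) * N1 ≤ lam * (mu + lam) * E1 := by
    have : mu * ((mu + lam * E1) * N1) ≤ mu * (lam * (mu + lam) * E1) := by linarith
    exact le_of_mul_le_mul_left this hmu
  have h5 : (mu + lam * E1) * E0 ≤ (mu + lam) * E1 := by
    have : lam * ((mu + lam * E1) * E0) ≤ lam * ((mu + lam) * E1) := by
      have := mul_le_mul_of_nonneg_left h3 (by positivity : 0 ≤ mu + lam * E1)
      linarith
    exact le_of_mul_le_mul_left this hlam
  -- `μ (E₀ - E₁) + λ E₁ (E₀ - 1) ≤ 0` with `E₁ ≤ E₀` forces `E₁ ≤ 1`.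
  have h6 : E1 ≤ 1 := by
    by_contra! hgt
    have h7 : 0 ≤ mu * (E0 - E1) := mul_nonneg hmu.le (by linarith)
    have h8 : 0 < lam * E1 * (E0 - 1) :=
      mul_pos (mul_pos hlam (by linarith)) (by linarith)
    nlinarith
  have h9 : (mu + lam * E1) * N1 ≤ (mu + lam * E1) * lam := by
    have := mul_nonneg (mul_nonneg hlam.le hmu.le) (sub_nonneg.2 h6)
    nlinarith
  exact le_of_mul_le_mul_left h9 (by positivity)

/-! ### The total mass -/

lemma fderiv_periodic {D : VortexData} {u : R2 → ℝ} (hu : Periodic2 D.a1 D.a2 u) (x : R2) {w : R2}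
    (hw : w ∈ lattice D.a1 D.a2) : fderiv ℝ u (x + w) = fderiv ℝ u x := by
  have : (fun y => u (y + w)) = u := funext fun y => hu y w hw
  rw [← fderiv_comp_add_right, this]

lemma VortexData.L_one_left (D : VortexData) (t : ℝ) :
    ∃ w ∈ lattice D.a1 D.a2, D.L (1, t) = D.L (0, t) + w :=
  ⟨D.L (1, 0), D.mem_lattice.2 ⟨1, 0, by simp⟩, by rw [← map_add]; simp⟩

lemma VortexData.L_one_right (D : VortexData) (t : ℝ) :
    ∃ w ∈ lattice D.a1 D.a2, D.L (t, 1) = D.L (t, 0) + w :=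
  ⟨D.L (0, 1), D.mem_lattice.2 ⟨0, 1, by simp⟩, by rw [← map_add]; simp⟩

lemma VortexData.L_mem_cell (D : VortexData) {t : ℝ × ℝ} :
    D.L t ∈ cell D.a1 D.a2 ↔ t ∈ Ioo (0:ℝ) 1 ×ˢ Ioo (0:ℝ) 1 := by
  rw [D.cell_eq, D.L.injective.mem_set_image]

lemma integral_lap_periodic {D : VortexData} {f : R2 → ℝ} (hf : ContDiff ℝ 2 f)
    (hp : Periodic2 D.a1 D.a2 f) : ∫ x in cell D.a1 D.a2, lap f x = 0 := by
  refine D.integral_lap_eq_zero (fun x _ => hf.contDiffAt) (fun t _ => ?_) fun t _ => ?_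
  · obtain ⟨w, hw, he⟩ := D.L_one_left t
    rw [he, fderiv_periodic hp _ hw]
  · obtain ⟨w, hw, he⟩ := D.L_one_right t
    rw [he, fderiv_periodic hp _ hw]

lemma ContDiffAt.integrableOn_lap {D : VortexData} {f : R2 → ℝ}
    (hf : ∀ x ∈ D.K, ContDiffAt ℝ 2 f x) : IntegrableOn (lap f) (cell D.a1 D.a2) := by
  have hc : ContinuousOn (lap f) D.K := fun x hx =>
    (continuousAt_lap (hf x hx)).continuousWithinAt
  exact (hc.integrableOn_compact D.isCompact_K).mono_set D.cell_subset_K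

/-- Replacing `ln |x - pᵢ|` by a regularization in a small disc about each vortex point turns `u`
into a function `w` that is `C²` on the closed cell and agrees with `u` near its edges. The Laplacians
differ by bumps `q i` of mass `2π`, one for each vortex point. -/
lemma IsMCSSolution.exists_regularization {D : VortexData} {lam mu : ℝ} {u N : R2 → ℝ}
    (h : IsMCSSolution D lam mu u N) :
    ∃ (w : R2 → ℝ) (q : Fin D.n → R2 → ℝ),
      (∀ x ∈ D.K, ContDiffAt ℝ 2 w x) ∧
      (∀ x ∈ D.K, x ∉ cell D.a1 D.a2 → w =ᶠ[nhds x] u) ∧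
      (∀ x ∈ D.K, x ∉ D.sing → lap u x = lap w x - ∑ i, 2 * (D.m i : ℝ) * q i x) ∧
      (∀ i, Continuous (q i)) ∧
      (∀ i, ∫ x in cell D.a1 D.a2, q i x = 2 * π) := by
  classical
  obtain ⟨ρ, h0, v, hv, hcell, hdisj, hu⟩ := h.local_form
  obtain ⟨k, hk, hlog⟩ := exists_smooth_log ((ρ / 2) ^ 2) (by positivity)
  have h2 : 0 < ρ / 2 := by positivity
  set w : R2 → ℝ := fun x => if hx : ∃ i, x ∈ ball (D.p i) ρ then
    v hx.choose x + 2 * (D.m hx.choose : ℝ) * k (‖x - D.p hx.choose‖ ^ 2) else u x with hw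
  set q : Fin D.n → R2 → ℝ := fun i => lap fun y => k (‖y - D.p i‖ ^ 2) with hq
  have hwin : ∀ i, ∀ x ∈ ball (D.p i) ρ,
      w x = v i x + 2 * (D.m i : ℝ) * k (‖x - D.p i‖ ^ 2) := by
    intro i x hx
    have hex : ∃ i, x ∈ ball (D.p i) ρ := ⟨i, hx⟩
    have : hex.choose = i := hdisj _ _ x hex.choose_spec hx
    simp only [hw, dif_pos hex]
    rw [this]
  have hwout : ∀ x, (∀ i, ρ / 2 < ‖x - D.p i‖) → w x = u x := by
    intro x hx
    by_cases hex : ∃ i, x ∈ ball (D.p i) ρ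
    · obtain ⟨i, hi⟩ := hex
      have hne : x ≠ D.p i := by
        rintro rfl
        have := hx i
        simp at this
        linarith
      rw [hwin i x hi, (hu i x hi hne).2, hlog]
      have := (hx i).le
      gcongr
    · simp only [hw, dif_neg hex]
  have hfar : ∀ {i x}, x ∉ ball (D.p i) ρ → ρ / 2 < ‖x - D.p i‖ := by
    intro i x hx
    rw [mem_ball, dist_eq_norm, not_lt] at hx
    linarith
  have hwu : ∀ x, (∀ i, x ∉ ball (D.p i) ρ) → w =ᶠ[nhds x] u := by
    intro x hx
    have : ∀ i, ∀ᶠ y in nhds x, ρ / 2 < ‖y - D.p i‖ := by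
      intro i
      have hc : Continuous fun y : R2 => ‖y - D.p i‖ := by fun_prop
      exact hc.continuousAt.eventually (lt_mem_nhds (hfar (hx i)))
    filter_upwards [eventually_all.2 this] with y hy using hwout y hy
  have hkc : ∀ i, ContDiff ℝ 2 fun y : R2 => k (‖y - D.p i‖ ^ 2) := fun i =>
    hk.comp ((contDiff_id.sub contDiff_const).norm_sq ℝ)
  have hvc : ∀ i, ∀ x ∈ ball (D.p i) ρ, ContDiffAt ℝ 2 (v i) x := fun i x hx =>
    (hv i).contDiffAt (isOpen_ball.mem_nhds hx)
  have hwev : ∀ i, ∀ x ∈ ball (D.p i) ρ,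
      w =ᶠ[nhds x] fun y => v i y + 2 * (D.m i : ℝ) * k (‖y - D.p i‖ ^ 2) := by
    intro i x hx
    filter_upwards [isOpen_ball.mem_nhds hx] with y hy using hwin i y hy
  have hq0 : ∀ {i x}, x ∉ ball (D.p i) ρ → q i x = 0 := fun hx =>
    lap_reg_eq_zero h2 hlog _ _ (hfar hx)
  refine ⟨w, q, ?_, ?_, ?_, fun i => continuous_lap_reg hk _, ?_⟩
  · intro x hx
    by_cases hex : ∃ i, x ∈ ball (D.p i) ρ
    · obtain ⟨i, hi⟩ := hex
      exact ((hvc i x hi).add (contDiffAt_const.mul (hkc i).contDiffAt)).congr_of_eventuallyEq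
        (hwev i x hi)
    · push Not at hex
      refine (h.contDiffAt_u fun hs => ?_).congr_of_eventuallyEq (hwu x hex)
      obtain ⟨i, rfl⟩ := D.exists_eq_p hx hs
      exact hex i (mem_ball_self h0)
  · exact fun x _ hx => hwu x fun i hi => hx (hcell i hi)
  · intro x hx hs
    by_cases hex : ∃ i, x ∈ ball (D.p i) ρ
    · obtain ⟨i, hi⟩ := hex
      have hne : ∀ {y}, y ∉ D.sing → y ≠ D.p i := fun hy h => hy (h ▸ D.p_mem_sing i)
      have hxp : ‖x - D.p i‖ ^ 2 ≠ 0 := by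
        simpa [sub_eq_zero] using hne hs
      have hlogc : ContDiffAt ℝ 2 (fun y : R2 => Real.log (‖y - D.p i‖ ^ 2) / 2) x :=
        (((contDiff_id.sub contDiff_const).norm_sq ℝ).contDiffAt.log hxp).div_const 2
      have huev : u =ᶠ[nhds x]
          fun y => v i y + 2 * (D.m i : ℝ) * (Real.log (‖y - D.p i‖ ^ 2) / 2) := by
        filter_upwards [isOpen_ball.mem_nhds hi, D.isClosed_sing.isOpen_compl.mem_nhds hs]
          with y hy hys using (hu i y hy (hne hys)).2
      rw [lap_congr huev, lap_congr (hwev i x hi),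
        lap_add (hvc i x hi) (contDiffAt_const.mul hlogc),
        lap_add (hvc i x hi) (contDiffAt_const.mul (hkc i).contDiffAt),
        lap_const_mul hlogc, lap_const_mul (hkc i).contDiffAt, lap_log _ _ (hne hs),
        Finset.sum_eq_single i]
      · simp only [hq]; ring
      · intro j _ hji
        rw [hq0 fun hj => hji (hdisj j i x hj hi), mul_zero]
      · simp
    · push Not at hex
      rw [lap_congr (hwu x hex), Finset.sum_eq_zero, sub_zero]
      intro i _
      rw [hq0 (hex i), mul_zero]
  · intro i
    rw [setIntegral_eq_integral_of_forall_compl_eq_zero fun x hx => hq0 fun hb => hx (hcell i hb)]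
    exact integral_lap_reg hk h2 hlog _

/-- Almost every point of the cell is nonsingular. -/
lemma VortexData.ae_notMem_sing (D : VortexData) :
    ∀ᵐ x ∂(volume.restrict (cell D.a1 D.a2)), x ∈ D.K ∧ x ∉ D.sing := by
  have hfin : (range D.p).Finite := finite_range _
  filter_upwards [ae_restrict_mem D.isOpen_cell.measurableSet,
    ae_restrict_of_ae (compl_mem_ae_iff.2 (hfin.measure_zero volume))]
    with x hx hp
  refine ⟨D.cell_subset_K hx, fun hs => hp ?_⟩
  obtain ⟨i, rfl⟩ := D.exists_eq_p (D.cell_subset_K hx) hs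
  exact mem_range_self i

/-- The flux of `∇u` through the vortex points: each vortex point of multiplicity `mᵢ` contributes
`-4π mᵢ` to the integral of the pointwise Laplacian. -/
lemma IsMCSSolution.integral_lap_u {D : VortexData} {lam mu : ℝ} {u N : R2 → ℝ}
    (h : IsMCSSolution D lam mu u N) :
    IntegrableOn (lap u) (cell D.a1 D.a2) ∧
      ∫ x in cell D.a1 D.a2, lap u x = -(4 * π * D.M) := by
  obtain ⟨w, q, hw, hedge, hlap, hqc, hqi⟩ := h.exists_regularization
  have hae : lap u =ᵐ[volume.restrict (cell D.a1 D.a2)]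
      fun x => lap w x - ∑ i, 2 * (D.m i : ℝ) * q i x := by
    filter_upwards [D.ae_notMem_sing] with x hx using hlap x hx.1 hx.2
  have hiw := ContDiffAt.integrableOn_lap hw
  have hiq : ∀ i, IntegrableOn (fun x => 2 * (D.m i : ℝ) * q i x) (cell D.a1 D.a2) := fun i =>
    ((continuous_const.mul (hqc i)).continuousOn.integrableOn_compact D.isCompact_K).mono_set
      D.cell_subset_K
  have hiS : IntegrableOn (fun x => ∑ i, 2 * (D.m i : ℝ) * q i x) (cell D.a1 D.a2) :=
    integrable_finsetSum _ fun i _ => hiq i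
  refine ⟨(hiw.sub hiS).congr hae.symm, ?_⟩
  have hK1 : ∀ t ∈ Icc (0:ℝ) 1, ∀ s ∈ Icc (0:ℝ) 1, D.L (s, t) ∈ D.K := fun t ht s hs =>
    ⟨(s, t), ⟨⟨hs.1, ht.1⟩, ⟨hs.2, ht.2⟩⟩, rfl⟩
  have hz : (0:ℝ) ∈ Icc (0:ℝ) 1 := by simp
  have ho : (1:ℝ) ∈ Icc (0:ℝ) 1 := by simp
  have hw0 : ∫ x in cell D.a1 D.a2, lap w x = 0 := by
    refine D.integral_lap_eq_zero hw (fun t ht => ?_) fun t ht => ?_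
    · rw [(hedge _ (hK1 t ht 1 ho) (by simp [D.L_mem_cell])).fderiv_eq,
        (hedge _ (hK1 t ht 0 hz) (by simp [D.L_mem_cell])).fderiv_eq]
      obtain ⟨ω, hω, he⟩ := D.L_one_left t
      rw [he, fderiv_periodic h.1 _ hω]
    · rw [(hedge _ (hK1 1 ho t ht) (by simp [D.L_mem_cell])).fderiv_eq,
        (hedge _ (hK1 0 hz t ht) (by simp [D.L_mem_cell])).fderiv_eq]
      obtain ⟨ω, hω, he⟩ := D.L_one_right t
      rw [he, fderiv_periodic h.1 _ hω]
  rw [integral_congr_ae hae, integral_sub hiw hiS, hw0, integral_finsetSum _ fun i _ => hiq i]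
  simp_rw [integral_const_mul, hqi]
  rw [zero_sub, VortexData.M, Finset.mul_sum]
  congr 1
  exact Finset.sum_congr rfl fun i _ => by ring

/-- the total mass identities
`∫_Ω λ² eᵘ (1 − N/λ) = 4π𝔐 = ∫_Ω λ² eᵘ |1 − N/λ|`. -/
theorem stmt1 (D : VortexData) (lam mu : ℝ) (hlam : 0 < lam) (hmu : 0 < mu)
    (u N : R2 → ℝ) (h : IsMCSSolution D lam mu u N) :
    (∫ x in cell D.a1 D.a2, lam ^ 2 * D.expu u x * (1 - N x / lam)) = 4 * π * D.M ∧
    (∫ x in cell D.a1 D.a2, lam ^ 2 * D.expu u x * |1 - N x / lam|) = 4 * π * D.M := by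
  have hmain :
      (∫ x in cell D.a1 D.a2, lam ^ 2 * D.expu u x * (1 - N x / lam)) = 4 * π * D.M := by
    have hN : ContDiff ℝ 2 N := h.2.2.2.1.of_le two_le_smooth
    obtain ⟨hiu, hu⟩ := h.integral_lap_u
    have hiN := ContDiffAt.integrableOn_lap (D := D) fun x _ => hN.contDiffAt
    -- The two equations combine to `λ² e^u (1 - N/λ) = -Δu - ΔN/μ` off the vortex points.
    have hae : (fun x => lam ^ 2 * D.expu u x * (1 - N x / lam))
        =ᵐ[volume.restrict (cell D.a1 D.a2)] fun x => -lap u x - mu⁻¹ * lap N x := by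
      filter_upwards [D.ae_notMem_sing] with x hx
      rw [h.2.2.2.2.2.1 x hx.2, h.2.2.2.2.2.2 x, expu_of_notMem u hx.2]
      field_simp
      ring
    have hin : IntegrableOn (fun x => -lap u x) (cell D.a1 D.a2) := hiu.neg
    rw [integral_congr_ae hae, integral_sub hin (hiN.const_mul _), integral_neg, hu,
      integral_const_mul, integral_lap_periodic hN h.2.1]
    ring
  refine ⟨hmain, ?_⟩
  rw [← hmain]
  congr 1
  ext x
  rw [abs_of_nonneg]
  rw [sub_nonneg, div_le_one hlam]
  exact h.N_le hlam hmu x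

end
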